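/- arXiv:2405.07739 — 2 statements merged into one kernel-verified Lean document; each statement's English description precedes it below -/
import Mathlib

section
/- Let r ≤ min(p, q) and let U ∈ ℂ^{p×r}, V ∈ ℂ^{q×r} have orthonormal columns (UᴴU = I_r and VᴴV = I_r). The function G(Σ, x) := (1/2)‖s − 𝓟_Ω x‖₂² + (β/2)‖UΣVᴴ − 𝓗x‖_F² + (α/2)‖x‖₂² on ℂ^{r×r} × ℂⁿ has a unique global minimizer (Σ*, x†), and this minimizer is characterized by the equations x† = 𝓛(𝓟_Ω s + β𝓗*(UΣ*Vᴴ)) and Σ* − β Uᴴ(𝓗(𝓛(𝓗*(UΣ*Vᴴ))))V = Uᴴ(𝓗(𝓛(𝓟_Ω s)))V. -/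
open scoped BigOperators

namespace LPPG

/-- The Hankel operator. -/
noncomputable def hankel (p q n : ℕ) (hn : p + q = n + 1) (x : Fin n → ℂ) :
    Matrix (Fin p) (Fin q) ℂ :=
  fun i j => x ⟨i.1 + j.1, by have hi := i.2; have hj := j.2; omega⟩

/-- The adjoint `𝓗*` of the Hankel operator. -/
noncomputable def hankelAdj (p q n : ℕ) (X : Matrix (Fin p) (Fin q) ℂ) : Fin n → ℂ :=
  fun a => ∑ i : Fin p, ∑ j : Fin q, if (i : ℕ) + (j : ℕ) = (a : ℕ) then X i j else 0

/-- The antidiagonal count `w_a`. -/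
def w (p q : ℕ) (a : ℕ) : ℕ :=
  (Finset.univ.filter (fun ij : Fin p × Fin q => (ij.1 : ℕ) + (ij.2 : ℕ) = a)).card

/-- The sampling operator `𝓟_Ω`. -/
def projOmega (n : ℕ) (Ω : Finset (Fin n)) (x : Fin n → ℂ) : Fin n → ℂ :=
  fun a => if a ∈ Ω then x a else 0

/-- The entrywise operator `𝓛`. -/
noncomputable def Lop (p q n : ℕ) (α β : ℝ) (Ω : Finset (Fin n)) (x : Fin n → ℂ) : Fin n → ℂ :=
  fun a => x a / ((α : ℂ) + (if a ∈ Ω then 1 else 0) + (β : ℂ) * (w p q (a : ℕ) : ℂ))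

/-- The objective `G(Σ, x) = (1/2)‖s − 𝓟_Ω x‖₂² + (β/2)‖UΣVᴴ − 𝓗x‖_F² + (α/2)‖x‖₂²`. -/
noncomputable def Gfun (p q n r : ℕ) (hn : p + q = n + 1) (α β : ℝ) (Ω : Finset (Fin n))
    (s : Fin n → ℂ) (U : Matrix (Fin p) (Fin r) ℂ) (V : Matrix (Fin q) (Fin r) ℂ)
    (S : Matrix (Fin r) (Fin r) ℂ) (x : Fin n → ℂ) : ℝ :=
  (1 / 2) * ∑ a : Fin n, ‖s a - projOmega n Ω x a‖ ^ 2
    + (β / 2) * ∑ i : Fin p, ∑ j : Fin q,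
        ‖(U * S * V.conjTranspose - hankel p q n hn x) i j‖ ^ 2
    + (α / 2) * ∑ a : Fin n, ‖x a‖ ^ 2

/-!
`2 G(Σ, x)` is the squared distance from a fixed vector to `A(Σ, x)`, where
`A(Σ, x) = (𝓟_Ω x, √β (UΣVᴴ − 𝓗x), √α x)` is linear, and injective because `U` and `V` have
orthonormal columns. Projecting onto the range of `A` gives existence and uniqueness, and the
minimizer is the solution of the normal equations
`α x + 𝓟_Ω x + β 𝓗*𝓗x = 𝓟_Ω s + β 𝓗*(UΣVᴴ)` and `Σ = Uᴴ(𝓗x)V`.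
Since `𝓗*𝓗` is multiplication by `w`, the operator on the left of the first is inverted by `𝓛`;
substituting the resulting `x` into the second gives the equation for `Σ`.
-/

open Matrix

section LeastSquares

variable {𝕜 E F : Type*} [RCLike 𝕜] [AddCommGroup E] [Module 𝕜 E] [NormedAddCommGroup F]
  [InnerProductSpace 𝕜 F] (A : E →ₗ[𝕜] F) (b : F)

lemma forall_norm_sub_map_le_iff_sub_mem_orthogonal (z : E) :
    (∀ z', ‖b - A z‖ ≤ ‖b - A z'‖) ↔ b - A z ∈ A.rangeᗮ := by
  have bddBelow : BddBelow (Set.range fun y : A.range => ‖b - y‖) :=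
    ⟨0, by rintro - ⟨_, rfl⟩; positivity⟩
  rw [Submodule.mem_orthogonal', ← A.range.norm_eq_iInf_iff_inner_eq_zero (A.mem_range_self z),
    le_antisymm_iff, and_iff_left (ciInf_le bddBelow ⟨A z, A.mem_range_self z⟩),
    le_ciInf_iff bddBelow]
  simp

lemma existsUnique_forall_norm_sub_map_le [A.range.HasOrthogonalProjection]
    (hA : Function.Injective A) : ∃! z, ∀ z', ‖b - A z‖ ≤ ‖b - A z'‖ := by
  simp only [forall_norm_sub_map_le_iff_sub_mem_orthogonal]
  obtain ⟨z, hz⟩ : A.range.starProjection b ∈ A.range := A.range.starProjection_apply_mem b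
  refine ⟨z, ?_, fun y hy => hA ?_⟩
  · simpa only [hz] using A.range.sub_starProjection_mem_orthogonal b
  · rw [hz, Submodule.eq_starProjection_of_mem_orthogonal (A.mem_range_self y) hy]

end LeastSquares

section Matrix

variable {l m j k R : Type*} [Fintype l] [Fintype m] [Fintype j] [Fintype k]

lemma conjTranspose_mul_mul_mul_conjTranspose_mul [DecidableEq j] [DecidableEq k] [Semiring R]
    [StarRing R] {U : Matrix l j R} {V : Matrix m k R} (hU : Uᴴ * U = 1) (hV : Vᴴ * V = 1)
    (S : Matrix j k R) : Uᴴ * (U * S * Vᴴ) * V = S := by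
  calc Uᴴ * (U * S * Vᴴ) * V = (Uᴴ * U) * S * (Vᴴ * V) := by simp only [Matrix.mul_assoc]
    _ = S := by rw [hU, hV, Matrix.one_mul, Matrix.mul_one]

lemma trace_conjTranspose_mul_mul_conjTranspose_mul [CommSemiring R] [StarRing R]
    (U : Matrix l j R) (V : Matrix m k R) (D : Matrix j k R) (M : Matrix l m R) :
    ((U * D * Vᴴ)ᴴ * M).trace = (Dᴴ * (Uᴴ * M * V)).trace := by
  rw [conjTranspose_mul, conjTranspose_mul, conjTranspose_conjTranspose, Matrix.mul_assoc,
    trace_mul_comm]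
  simp only [Matrix.mul_assoc]

end Matrix

section Operators

variable {p q n : ℕ} (hn : p + q = n + 1) (Ω : Finset (Fin n))

lemma trace_conjTranspose_hankel_mul (d : Fin n → ℂ) (X : Matrix (Fin p) (Fin q) ℂ) :
    ((hankel p q n hn d)ᴴ * X).trace = star d ⬝ᵥ hankelAdj p q n X := by
  have entry (i : Fin p) (j : Fin q) :
      star (hankel p q n hn d i j) * X i j
        = ∑ a : Fin n, star (d a) * if (i : ℕ) + j = a then X i j else 0 := by
    rw [Finset.sum_eq_single (⟨i + j, by omega⟩ : Fin n)]
    · simp [hankel]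
    · intro a _ ha
      rw [if_neg fun h => ha (Fin.ext h.symm), mul_zero]
    · simp
  simp only [trace, diag_apply, Matrix.mul_apply, conjTranspose_apply, entry, dotProduct,
    Pi.star_apply, hankelAdj, Finset.mul_sum]
  rw [Finset.sum_comm, Finset.sum_comm_cycle]

lemma hankelAdj_hankel (x : Fin n → ℂ) (a : Fin n) :
    hankelAdj p q n (hankel p q n hn x) a = w p q a * x a := by
  have entry (i : Fin p) (j : Fin q) :
      (if (i : ℕ) + j = a then hankel p q n hn x i j else 0)
        = if (i : ℕ) + j = a then x a else 0 :=
    if_ctx_congr Iff.rfl (fun h => congrArg x (Fin.ext h)) fun _ => rfl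
  simp only [hankelAdj, entry]
  rw [← Fintype.sum_prod_type'
      (f := fun (i : Fin p) (j : Fin q) => if (i : ℕ) + j = a then x a else 0),
    ← Finset.sum_filter, Finset.sum_const, w, nsmul_eq_mul]

lemma hankelAdj_sub (X Y : Matrix (Fin p) (Fin q) ℂ) :
    hankelAdj p q n (X - Y) = hankelAdj p q n X - hankelAdj p q n Y := by
  ext a
  simp only [hankelAdj, Pi.sub_apply, Matrix.sub_apply, ← Finset.sum_sub_distrib, ite_sub_ite,
    sub_zero]

lemma star_projOmega_dotProduct (d y : Fin n → ℂ) :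
    star (projOmega n Ω d) ⬝ᵥ y = star d ⬝ᵥ projOmega n Ω y := by
  refine Finset.sum_congr rfl fun a _ => ?_
  by_cases ha : a ∈ Ω <;> simp [projOmega, ha]

lemma projOmega_sub_projOmega (y x : Fin n → ℂ) :
    projOmega n Ω (y - projOmega n Ω x) = projOmega n Ω y - projOmega n Ω x := by
  ext a
  by_cases ha : a ∈ Ω <;> simp [projOmega, ha]

lemma eq_Lop_iff {α β : ℝ} (hα : 0 < α) (hβ : 0 ≤ β) (x y : Fin n → ℂ) :
    x = Lop p q n α β Ω y ↔
      α • x + projOmega n Ω x + β • hankelAdj p q n (hankel p q n hn x) = y := by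
  simp only [funext_iff]
  refine forall_congr' fun a => ?_
  have weight_ne_zero : (α : ℂ) + (if a ∈ Ω then 1 else 0) + β * w p q a ≠ 0 := by
    split_ifs <;> norm_cast <;> positivity
  rw [Lop, eq_div_iff weight_ne_zero]
  simp only [Pi.add_apply, Pi.smul_apply, Complex.real_smul, hankelAdj_hankel, projOmega]
  refine Eq.congr_left ?_
  split_ifs <;> ring

lemma Lop_add_smul (α β c : ℝ) (y z : Fin n → ℂ) :
    Lop p q n α β Ω (y + c • z) = Lop p q n α β Ω y + c • Lop p q n α β Ω z := by
  ext a
  simp only [Lop, Pi.add_apply, Pi.smul_apply, add_div, smul_div_assoc]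

lemma hankel_add_smul (c : ℝ) (x y : Fin n → ℂ) :
    hankel p q n hn (x + c • y) = hankel p q n hn x + c • hankel p q n hn y := rfl

end Operators

section Objective

variable {p q n r : ℕ} (hn : p + q = n + 1) (α β : ℝ) (Ω : Finset (Fin n)) (s : Fin n → ℂ)
  (U : Matrix (Fin p) (Fin r) ℂ) (V : Matrix (Fin q) (Fin r) ℂ)

/-- The linear map `(Σ, x) ↦ (𝓟_Ω x, √β (UΣVᴴ − 𝓗x), √α x)` whose least-squares problem is the
minimization of `Gfun`; the matrix block is stored column by column, as `Matrix.vec`. -/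
noncomputable def designMap : Matrix (Fin r) (Fin r) ℂ × (Fin n → ℂ) →ₗ[ℂ]
    EuclideanSpace ℂ (Fin n ⊕ (Fin q × Fin p) ⊕ Fin n) where
  toFun P := WithLp.toLp 2 (Sum.elim (projOmega n Ω P.2)
    (Sum.elim (√β • vec (U * P.1 * Vᴴ - hankel p q n hn P.2)) (√α • P.2)))
  map_add' P Q := by
    ext (a | ⟨j, i⟩ | a)
    · by_cases ha : a ∈ Ω <;> simp [projOmega, ha]
    · simp only [Prod.fst_add, Prod.snd_add, Matrix.mul_add, Matrix.add_mul, Sum.elim_inr,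
        Sum.elim_inl, Pi.smul_apply, vec, Matrix.sub_apply, Matrix.add_apply, hankel, Pi.add_apply,
        Complex.real_smul, PiLp.add_apply]
      ring
    · simp
  map_smul' c P := by
    ext (a | ⟨j, i⟩ | a)
    · simp [projOmega]
    · simp only [Prod.smul_fst, Prod.smul_snd, Matrix.mul_smul, Matrix.smul_mul, Sum.elim_inr,
        Sum.elim_inl, Pi.smul_apply, vec, Matrix.sub_apply, Matrix.smul_apply, hankel, smul_eq_mul,
        Complex.real_smul, RingHom.id_apply, PiLp.smul_apply]
      ring
    · simp [mul_left_comm]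

variable (p q) in
/-- The right-hand side `(s, 0, 0)` of the least-squares problem for `designMap`. -/
noncomputable def designTarget : EuclideanSpace ℂ (Fin n ⊕ (Fin q × Fin p) ⊕ Fin n) :=
  WithLp.toLp 2 (Sum.elim s 0)

lemma designTarget_sub_designMap (S : Matrix (Fin r) (Fin r) ℂ) (x : Fin n → ℂ) :
    designTarget p q s - designMap hn α β Ω U V (S, x) =
      WithLp.toLp 2 (Sum.elim (s - projOmega n Ω x)
        (Sum.elim (-√β • vec (U * S * Vᴴ - hankel p q n hn x)) (-√α • x))) := by
  ext (a | ⟨j, i⟩ | a) <;> simp [designTarget, designMap]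

variable {α β}

lemma Gfun_eq_half_norm_sq (hα : 0 ≤ α) (hβ : 0 ≤ β) (S : Matrix (Fin r) (Fin r) ℂ)
    (x : Fin n → ℂ) :
    Gfun p q n r hn α β Ω s U V S x
      = 1 / 2 * ‖designTarget p q s - designMap hn α β Ω U V (S, x)‖ ^ 2 := by
  rw [designTarget_sub_designMap, EuclideanSpace.norm_sq_eq]
  simp only [Gfun, Fintype.sum_sum_type, Fintype.sum_prod_type_right, Sum.elim_inl, Sum.elim_inr,
    Pi.sub_apply, Pi.smul_apply, vec, norm_smul, norm_neg, Real.norm_eq_abs, mul_pow, sq_abs,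
    Real.sq_sqrt hα, Real.sq_sqrt hβ, ← Finset.mul_sum]
  ring

lemma Gfun_le_Gfun_iff (hα : 0 ≤ α) (hβ : 0 ≤ β) (S S' : Matrix (Fin r) (Fin r) ℂ)
    (x x' : Fin n → ℂ) :
    Gfun p q n r hn α β Ω s U V S x ≤ Gfun p q n r hn α β Ω s U V S' x' ↔
      ‖designTarget p q s - designMap hn α β Ω U V (S, x)‖
        ≤ ‖designTarget p q s - designMap hn α β Ω U V (S', x')‖ := by
  rw [Gfun_eq_half_norm_sq hn Ω s U V hα hβ, Gfun_eq_half_norm_sq hn Ω s U V hα hβ,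
    mul_le_mul_iff_right₀ one_half_pos, sq_le_sq₀ (norm_nonneg _) (norm_nonneg _)]

lemma inner_designMap_designTarget_sub (hα : 0 ≤ α) (hβ : 0 ≤ β)
    (S D : Matrix (Fin r) (Fin r) ℂ) (x d : Fin n → ℂ) :
    inner ℂ (designMap hn α β Ω U V (D, d))
        (designTarget p q s - designMap hn α β Ω U V (S, x)) =
      star d ⬝ᵥ (projOmega n Ω s + β • hankelAdj p q n (U * S * Vᴴ)
          - (α • x + projOmega n Ω x + β • hankelAdj p q n (hankel p q n hn x)))
        - β * (Dᴴ * (Uᴴ * (U * S * Vᴴ - hankel p q n hn x) * V)).trace := by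
  have sq_sqrt_α : (√α : ℂ) * √α = α := by exact_mod_cast Real.mul_self_sqrt hα
  have sq_sqrt_β : (√β : ℂ) * √β = β := by exact_mod_cast Real.mul_self_sqrt hβ
  calc
    _ = star (projOmega n Ω d) ⬝ᵥ (s - projOmega n Ω x)
          - β * ((U * D * Vᴴ - hankel p q n hn d)ᴴ * (U * S * Vᴴ - hankel p q n hn x)).trace
          - α * (star d ⬝ᵥ x) := by
      rw [designTarget_sub_designMap]
      simp only [designMap, LinearMap.coe_mk, AddHom.coe_mk, EuclideanSpace.inner_toLp_toLp,
        dotProduct_comm _ (star _), Function.star_sumElim, sumElim_dotProduct_sumElim, star_smul,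
        star_trivial, dotProduct_smul, star_vec_dotProduct_vec, Complex.real_smul,
        Complex.ofReal_neg]
      rw [← sq_sqrt_α, ← sq_sqrt_β]
      ring
    _ = _ := by
      rw [star_projOmega_dotProduct, projOmega_sub_projOmega, conjTranspose_sub, Matrix.sub_mul,
        trace_sub, trace_conjTranspose_mul_mul_conjTranspose_mul, trace_conjTranspose_hankel_mul,
        hankelAdj_sub]
      simp only [dotProduct_sub, dotProduct_add, dotProduct_smul, Complex.real_smul]
      ring

open scoped ComplexOrder in
lemma designTarget_sub_designMap_mem_orthogonal_iff (hα : 0 ≤ α) (hβ : 0 < β)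
    (S : Matrix (Fin r) (Fin r) ℂ) (x : Fin n → ℂ) :
    designTarget p q s - designMap hn α β Ω U V (S, x) ∈ (designMap hn α β Ω U V).rangeᗮ ↔
      α • x + projOmega n Ω x + β • hankelAdj p q n (hankel p q n hn x)
          = projOmega n Ω s + β • hankelAdj p q n (U * S * Vᴴ) ∧
        Uᴴ * (U * S * Vᴴ - hankel p q n hn x) * V = 0 := by
  simp only [Submodule.mem_orthogonal, LinearMap.mem_range, forall_exists_index,
    forall_apply_eq_imp_iff]
  simp only [Prod.forall, inner_designMap_designTarget_sub hn Ω s U V hα hβ.le]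
  refine ⟨fun h => ⟨?_, ?_⟩, fun ⟨hx, hS⟩ D d => by simp [hx, hS]⟩
  · have vector_variation := h 0
    simp only [conjTranspose_zero, Matrix.zero_mul, trace_zero, mul_zero, sub_zero]
      at vector_variation
    exact (sub_eq_zero.1 (dotProduct_star_self_eq_zero.1 (vector_variation _))).symm
  · have matrix_variation := fun D => h D 0
    simp only [star_zero, zero_dotProduct, zero_sub, neg_eq_zero, mul_eq_zero,
      Complex.ofReal_eq_zero, hβ.ne', false_or] at matrix_variation
    exact trace_conjTranspose_mul_self_eq_zero_iff.1 (matrix_variation _)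

variable {U V}

lemma designMap_injective (hα : 0 < α) (hβ : 0 < β) (hU : Uᴴ * U = 1) (hV : Vᴴ * V = 1) :
    Function.Injective (designMap hn α β Ω U V) := by
  refine (injective_iff_map_eq_zero _).2 fun ⟨D, d⟩ h => ?_
  have blocks := congrArg WithLp.ofLp h
  simp only [designMap, LinearMap.coe_mk, AddHom.coe_mk, WithLp.ofLp_zero,
    ← Sum.elim_zero_zero, Sum.elim_eq_iff, smul_eq_zero, vec_eq_zero_iff, Real.sqrt_ne_zero'.2 hα,
    Real.sqrt_ne_zero'.2 hβ, false_or] at blocks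
  obtain ⟨-, hD, rfl⟩ := blocks
  have hUDV : U * D * Vᴴ = 0 := (sub_zero _).symm.trans hD
  rw [← conjTranspose_mul_mul_mul_conjTranspose_mul hU hV D, hUDV]
  simp

lemma normal_equations_iff_eq_Lop (hα : 0 < α) (hβ : 0 ≤ β) (hU : Uᴴ * U = 1) (hV : Vᴴ * V = 1)
    (S : Matrix (Fin r) (Fin r) ℂ) (x : Fin n → ℂ) :
    (α • x + projOmega n Ω x + β • hankelAdj p q n (hankel p q n hn x)
          = projOmega n Ω s + β • hankelAdj p q n (U * S * Vᴴ) ∧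
        Uᴴ * (U * S * Vᴴ - hankel p q n hn x) * V = 0) ↔
      x = Lop p q n α β Ω (projOmega n Ω s + β • hankelAdj p q n (U * S * Vᴴ)) ∧
        S - β • (Uᴴ * hankel p q n hn (Lop p q n α β Ω (hankelAdj p q n (U * S * Vᴴ))) * V)
          = Uᴴ * hankel p q n hn (Lop p q n α β Ω (projOmega n Ω s)) * V := by
  rw [← eq_Lop_iff hn Ω hα hβ]
  refine and_congr_right fun hx => ?_
  have compress_hankel : Uᴴ * hankel p q n hn x * V
      = Uᴴ * hankel p q n hn (Lop p q n α β Ω (projOmega n Ω s)) * V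
        + β • (Uᴴ * hankel p q n hn (Lop p q n α β Ω (hankelAdj p q n (U * S * Vᴴ))) * V) := by
    conv_lhs => rw [hx]
    rw [Lop_add_smul, hankel_add_smul, Matrix.mul_add, Matrix.add_mul, Matrix.mul_smul,
      Matrix.smul_mul]
  rw [Matrix.mul_sub, Matrix.sub_mul, conjTranspose_mul_mul_mul_conjTranspose_mul hU hV,
    compress_hankel, sub_eq_zero, sub_eq_iff_eq_add]

end Objective

/-- `G(Σ,x)` has a unique global minimizer `(Σ*, x†)`, and the
global minimizers are exactly characterized by the equations
`x = 𝓛(𝓟_Ω s + β𝓗*(UΣVᴴ))` and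
`Σ − β Uᴴ(𝓗(𝓛(𝓗*(UΣVᴴ))))V = Uᴴ(𝓗(𝓛(𝓟_Ω s)))V`. -/
theorem Gfun_unique_minimizer_characterization
    (p q n r : ℕ) (hp : 0 < p) (hq : 0 < q) (hn : p + q = n + 1)
    (hr : r ≤ min p q)
    (α β : ℝ) (hα : 0 < α) (hβ : 0 < β) (Ω : Finset (Fin n)) (s : Fin n → ℂ)
    (U : Matrix (Fin p) (Fin r) ℂ) (V : Matrix (Fin q) (Fin r) ℂ)
    (hU : U.conjTranspose * U = 1) (hV : V.conjTranspose * V = 1) :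
    (∃! P : Matrix (Fin r) (Fin r) ℂ × (Fin n → ℂ),
        ∀ Q : Matrix (Fin r) (Fin r) ℂ × (Fin n → ℂ),
          Gfun p q n r hn α β Ω s U V P.1 P.2 ≤ Gfun p q n r hn α β Ω s U V Q.1 Q.2) ∧
    (∀ (S : Matrix (Fin r) (Fin r) ℂ) (x : Fin n → ℂ),
        (∀ (S' : Matrix (Fin r) (Fin r) ℂ) (x' : Fin n → ℂ),
            Gfun p q n r hn α β Ω s U V S x ≤ Gfun p q n r hn α β Ω s U V S' x')
        ↔ (x = Lop p q n α β Ω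
              (projOmega n Ω s + β • hankelAdj p q n (U * S * V.conjTranspose)) ∧
           S - β • (U.conjTranspose
                * hankel p q n hn (Lop p q n α β Ω
                    (hankelAdj p q n (U * S * V.conjTranspose)))
                * V)
             = U.conjTranspose * hankel p q n hn (Lop p q n α β Ω (projOmega n Ω s)) * V)) := by
  simp only [Gfun_le_Gfun_iff hn Ω s U V hα.le hβ.le, Prod.mk.eta]
  refine ⟨existsUnique_forall_norm_sub_map_le _ _ (designMap_injective hn Ω hα hβ hU hV),
    fun S x => ?_⟩
  rw [← Prod.forall', forall_norm_sub_map_le_iff_sub_mem_orthogonal,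
    designTarget_sub_designMap_mem_orthogonal_iff hn Ω s U V hα.le hβ,
    normal_equations_iff_eq_Lop hn Ω s hα hβ.le hU hV]

end LPPG
end

section
/- For every D ∈ ℂ^{p×q}, the subgradient representative arising in the LPPG stopping criterion is bounded in norm by a dimension-explicit multiple of ‖D‖_F: ‖β² 𝓗(𝓛(𝓗*D))‖_F ≤ (β² m/(α + βm)) · ‖D‖_F, where m := min(p, q); in particular ‖β² 𝓗(𝓛(𝓗*D))‖_F ≤ β ‖D‖_F. -/
open scoped BigOperators

namespace LPPG

/-- Frobenius norm of a complex matrix. -/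
noncomputable def frobNorm (p q : ℕ) (A : Matrix (Fin p) (Fin q) ℂ) : ℝ :=
  Real.sqrt (∑ i : Fin p, ∑ j : Fin q, ‖A i j‖ ^ 2)

/-!
On each antidiagonal `i + j = a` the operator `𝓗𝓛𝓗*` sums the entries of `D`, scales the sum by
`1 / (α + χ_Ω(a) + β w_a)` and copies the result to all `w_a` positions. The all-ones matrix of
size `w_a` has operator norm `w_a` (Cauchy–Schwarz), so `β²𝓗𝓛𝓗*` is block diagonal with blocks of
norm at most `β² w_a / (α + β w_a)`. This is increasing in `w_a ≤ min p q`.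
-/

section FiberSum

variable {ι κ 𝕜 E : Type*} [NormedField 𝕜] [SeminormedAddCommGroup E] [NormedSpace 𝕜 E]

lemma sum_norm_smul_sum_sq_le (F : Finset ι) (c : 𝕜) (x : ι → E) :
    ∑ _s ∈ F, ‖c • ∑ t ∈ F, x t‖ ^ 2 ≤ (‖c‖ * F.card) ^ 2 * ∑ t ∈ F, ‖x t‖ ^ 2 := by
  have norm_sum_sq_le : ‖∑ t ∈ F, x t‖ ^ 2 ≤ F.card * ∑ t ∈ F, ‖x t‖ ^ 2 :=
    (pow_le_pow_left₀ (norm_nonneg _) (norm_sum_le _ _) 2).trans sq_sum_le_card_mul_sum_sq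
  calc ∑ _s ∈ F, ‖c • ∑ t ∈ F, x t‖ ^ 2
      = F.card * ‖c‖ ^ 2 * ‖∑ t ∈ F, x t‖ ^ 2 := by
        rw [Finset.sum_const, nsmul_eq_mul, norm_smul, mul_pow, mul_assoc]
    _ ≤ F.card * ‖c‖ ^ 2 * (F.card * ∑ t ∈ F, ‖x t‖ ^ 2) := by gcongr
    _ = (‖c‖ * F.card) ^ 2 * ∑ t ∈ F, ‖x t‖ ^ 2 := by ring

lemma sum_norm_smul_fiber_sum_sq_le [Fintype ι] [DecidableEq κ] (f : ι → κ) (c : κ → 𝕜)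
    (x : ι → E) {C : ℝ} (hC : ∀ s, ‖c (f s)‖ * (Finset.univ.filter (f · = f s)).card ≤ C) :
    ∑ s, ‖c (f s) • ∑ t with f t = f s, x t‖ ^ 2 ≤ C ^ 2 * ∑ s, ‖x s‖ ^ 2 := by
  have maps_to_image : ∀ s ∈ Finset.univ, f s ∈ Finset.univ.image f :=
    fun s hs => Finset.mem_image_of_mem f hs
  rw [← Finset.sum_fiberwise_of_maps_to maps_to_image,
    ← Finset.sum_fiberwise_of_maps_to maps_to_image (fun s => ‖x s‖ ^ 2), Finset.mul_sum]
  refine Finset.sum_le_sum fun b hb => ?_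
  obtain ⟨r, -, rfl⟩ := Finset.mem_image.1 hb
  calc ∑ s with f s = f r, ‖c (f s) • ∑ t with f t = f s, x t‖ ^ 2
      = ∑ s with f s = f r, ‖c (f r) • ∑ t with f t = f r, x t‖ ^ 2 :=
        Finset.sum_congr rfl fun s hs => by rw [(Finset.mem_filter.1 hs).2]
    _ ≤ (‖c (f r)‖ * (Finset.univ.filter (f · = f r)).card) ^ 2 *
          ∑ t with f t = f r, ‖x t‖ ^ 2 := sum_norm_smul_sum_sq_le _ _ _
    _ ≤ C ^ 2 * ∑ t with f t = f r, ‖x t‖ ^ 2 := by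
        gcongr
        exact hC r

end FiberSum

section Gain

variable {α β : ℝ}

lemma sq_mul_div_add_mul_le_of_le (hα : 0 < α) (hβ : 0 ≤ β) {s t : ℝ} (hs : 0 ≤ s)
    (hst : s ≤ t) : β ^ 2 * s / (α + β * s) ≤ β ^ 2 * t / (α + β * t) := by
  have ht : 0 ≤ t := hs.trans hst
  rw [div_le_div_iff₀ (by positivity) (by positivity)]
  have cross_term : β ^ 2 * α * s ≤ β ^ 2 * α * t := by gcongr
  linarith

lemma sq_mul_div_add_mul_le (hα : 0 ≤ α) (hβ : 0 ≤ β) {t : ℝ} (ht : 0 ≤ t) :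
    β ^ 2 * t / (α + β * t) ≤ β := by
  refine div_le_of_le_mul₀ (by positivity) hβ ?_
  have : 0 ≤ β * α := by positivity
  linarith

end Gain

lemma frobNorm_eq_sqrt_sum_prod {p q : ℕ} (A : Matrix (Fin p) (Fin q) ℂ) :
    frobNorm p q A = √(∑ s : Fin p × Fin q, ‖A s.1 s.2‖ ^ 2) := by
  rw [frobNorm, Fintype.sum_prod_type]

section Antidiagonal

variable {p q n : ℕ}

/-- The index `i + j` of the antidiagonal through position `(i, j)`, as an element of `Fin n`.
`𝓗` is composition with this map and `𝓗*` is summation over its fibers. -/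
def antidiagIndex (hn : p + q = n + 1) (s : Fin p × Fin q) : Fin n :=
  ⟨s.1 + s.2, by omega⟩

lemma hankelAdj_eq_sum_fiber (hn : p + q = n + 1) (X : Matrix (Fin p) (Fin q) ℂ) (a : Fin n) :
    hankelAdj p q n X a = ∑ t with antidiagIndex hn t = a, X t.1 t.2 := by
  simp only [hankelAdj, antidiagIndex, Fin.ext_iff, Finset.sum_filter, Fintype.sum_prod_type]

lemma w_eq_card_fiber (hn : p + q = n + 1) (a : Fin n) :
    w p q a = (Finset.univ.filter (antidiagIndex hn · = a)).card := by
  simp only [w, antidiagIndex, Fin.ext_iff]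

lemma w_le_left (p q a : ℕ) : w p q a ≤ p := by
  refine (Finset.card_le_card_of_injOn (t := Finset.univ) Prod.fst
    (fun _ _ => Finset.mem_coe.2 (Finset.mem_univ _)) ?_).trans_eq (Finset.card_fin p)
  rintro ⟨i, j⟩ h ⟨i', j'⟩ h' hii'
  grind

lemma w_le_right (p q a : ℕ) : w p q a ≤ q := by
  refine (Finset.card_le_card_of_injOn (t := Finset.univ) Prod.snd
    (fun _ _ => Finset.mem_coe.2 (Finset.mem_univ _)) ?_).trans_eq (Finset.card_fin q)
  rintro ⟨i, j⟩ h ⟨i', j'⟩ h' hjj'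
  grind

end Antidiagonal

section Lop

variable {p q n : ℕ} {α β : ℝ}

/-- The number `α + χ_Ω(a) + β w_a` by which `𝓛` divides the `a`-th entry; complex-valued because
`Lop` divides in `ℂ`. -/
noncomputable def lopDenom (p q : ℕ) {n : ℕ} (α β : ℝ) (Ω : Finset (Fin n)) (a : Fin n) : ℂ :=
  (α : ℂ) + (if a ∈ Ω then 1 else 0) + (β : ℂ) * (w p q (a : ℕ) : ℂ)

lemma add_mul_w_le_norm_lopDenom (α β : ℝ) (Ω : Finset (Fin n)) (a : Fin n) :
    α + β * w p q a ≤ ‖lopDenom p q α β Ω a‖ := by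
  refine le_trans ?_ (Complex.re_le_norm _)
  unfold lopDenom
  split_ifs <;> simp

lemma norm_sq_div_lopDenom_mul_w_le (hα : 0 < α) (hβ : 0 ≤ β) (Ω : Finset (Fin n)) (a : Fin n) :
    ‖(β : ℂ) ^ 2 / lopDenom p q α β Ω a‖ * w p q a ≤
      β ^ 2 * (min p q : ℝ) / (α + β * (min p q : ℝ)) := by
  have w_le_min : (w p q a : ℝ) ≤ min (p : ℝ) q :=
    mod_cast le_min (w_le_left p q a) (w_le_right p q a)
  calc ‖(β : ℂ) ^ 2 / lopDenom p q α β Ω a‖ * w p q a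
      = β ^ 2 / ‖lopDenom p q α β Ω a‖ * w p q a := by
        rw [norm_div, norm_pow, Complex.norm_of_nonneg hβ]
    _ ≤ β ^ 2 / (α + β * w p q a) * w p q a := by
        gcongr
        exact add_mul_w_le_norm_lopDenom α β Ω a
    _ = β ^ 2 * w p q a / (α + β * w p q a) := div_mul_eq_mul_div _ _ _
    _ ≤ β ^ 2 * (min p q : ℝ) / (α + β * (min p q : ℝ)) :=
        sq_mul_div_add_mul_le_of_le hα hβ (Nat.cast_nonneg _) w_le_min

lemma sq_smul_hankel_Lop_hankelAdj_apply (hn : p + q = n + 1) (α β : ℝ) (Ω : Finset (Fin n))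
    (D : Matrix (Fin p) (Fin q) ℂ) (s : Fin p × Fin q) :
    ((β ^ 2) • hankel p q n hn (Lop p q n α β Ω (hankelAdj p q n D))) s.1 s.2 =
      ((β : ℂ) ^ 2 / lopDenom p q α β Ω (antidiagIndex hn s)) •
        ∑ t with antidiagIndex hn t = antidiagIndex hn s, D t.1 t.2 := by
  have hankel_Lop_apply : hankel p q n hn (Lop p q n α β Ω (hankelAdj p q n D)) s.1 s.2 =
      hankelAdj p q n D (antidiagIndex hn s) / lopDenom p q α β Ω (antidiagIndex hn s) := rfl
  rw [Matrix.smul_apply, hankel_Lop_apply, hankelAdj_eq_sum_fiber hn, Complex.real_smul,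
    Complex.ofReal_pow, smul_eq_mul, mul_div_assoc', div_mul_eq_mul_div]

lemma frobNorm_sq_smul_hankel_Lop_hankelAdj_le (hn : p + q = n + 1) (hα : 0 < α) (hβ : 0 ≤ β)
    (Ω : Finset (Fin n)) (D : Matrix (Fin p) (Fin q) ℂ) :
    frobNorm p q ((β ^ 2) • hankel p q n hn (Lop p q n α β Ω (hankelAdj p q n D))) ≤
      (β ^ 2 * (min p q : ℝ) / (α + β * (min p q : ℝ))) * frobNorm p q D := by
  rw [frobNorm_eq_sqrt_sum_prod, frobNorm_eq_sqrt_sum_prod]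
  refine Real.sqrt_le_iff.2 ⟨by positivity, ?_⟩
  rw [mul_pow, Real.sq_sqrt (by positivity)]
  simp only [sq_smul_hankel_Lop_hankelAdj_apply]
  refine sum_norm_smul_fiber_sum_sq_le (antidiagIndex hn)
    (fun a => (β : ℂ) ^ 2 / lopDenom p q α β Ω a) (fun t => D t.1 t.2) fun s => ?_
  rw [← w_eq_card_fiber]
  exact norm_sq_div_lopDenom_mul_w_le hα hβ Ω _

end Lop

/-- for every `D ∈ ℂ^{p×q}`,
`‖β²𝓗(𝓛(𝓗*D))‖_F ≤ (β²m/(α + βm))‖D‖_F ≤ β‖D‖_F` with `m = min(p,q)`. -/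
theorem stopping_criterion_norm_bound
    (p q n : ℕ) (hp : 0 < p) (hq : 0 < q) (hn : p + q = n + 1)
    (α β : ℝ) (hα : 0 < α) (hβ : 0 < β) (Ω : Finset (Fin n))
    (D : Matrix (Fin p) (Fin q) ℂ) :
    frobNorm p q ((β ^ 2) • hankel p q n hn (Lop p q n α β Ω (hankelAdj p q n D)))
      ≤ (β ^ 2 * (min p q : ℝ) / (α + β * (min p q : ℝ))) * frobNorm p q D ∧
    frobNorm p q ((β ^ 2) • hankel p q n hn (Lop p q n α β Ω (hankelAdj p q n D)))
      ≤ β * frobNorm p q D := by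
  have gain_bound := frobNorm_sq_smul_hankel_Lop_hankelAdj_le hn hα hβ.le Ω D
  have gain_le : β ^ 2 * (min p q : ℝ) / (α + β * (min p q : ℝ)) ≤ β :=
    sq_mul_div_add_mul_le hα.le hβ.le (by positivity)
  exact ⟨gain_bound, gain_bound.trans (mul_le_mul_of_nonneg_right gain_le (Real.sqrt_nonneg _))⟩

end LPPG
end
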